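/- arXiv:1601.01205 — 2 statements merged into one kernel-verified Lean document; each statement's English description precedes it below -/
import Mathlib

section
/- Let X be a spectral space and dim a spectral dimension function on X. Then for every ordinal α the subset X_{>α} = {x ∈ X : dim x > α}, equipped with the subspace topology, is proconstructible and hence a spectral subspace of X. -/
open TopologicalSpace Set

universe u

/-- A topological space is *spectral* if it is quasi-compact, `T0`, has a basis of quasi-compact
open subsets closed under finite intersections, and every nonempty irreducible closed subset
has a (necessarily unique) generic point. -/
structure IsSpectralSpace (X : Type*) [TopologicalSpace X] : Prop where
  compactSpace : CompactSpace X
  t0Space : T0Space X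
  basis : ∃ B : Set (Set X), (∀ U ∈ B, IsOpen U ∧ IsCompact U) ∧
    Set.univ ∈ B ∧ (∀ U ∈ B, ∀ V ∈ B, U ∩ V ∈ B) ∧ TopologicalSpace.IsTopologicalBasis B
  quasiSober : QuasiSober X

/-- The constructible topology: generated by the quasi-compact opens and their complements. -/
def constructibleTop (X : Type*) [TopologicalSpace X] : TopologicalSpace X :=
  TopologicalSpace.generateFrom
    ({U : Set X | IsOpen U ∧ IsCompact U} ∪ {U : Set X | IsOpen Uᶜ ∧ IsCompact Uᶜ})

/-- A subset is Thomason if it is a union of closed subsets with quasi-compact open complement. -/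
def IsThomason {X : Type*} [TopologicalSpace X] (V : Set X) : Prop :=
  ∃ S : Set (Set X), (∀ C ∈ S, IsClosed C ∧ IsOpen Cᶜ ∧ IsCompact Cᶜ) ∧ V = ⋃₀ S

/-- A point is visible if `{x} = V \ (V ∩ W)` for Thomason subsets `V`, `W`. -/
def IsVisiblePoint {X : Type*} [TopologicalSpace X] (x : X) : Prop :=
  ∃ V W : Set X, IsThomason V ∧ IsThomason W ∧ ({x} : Set X) = V \ (V ∩ W)

/-- A dimension function on a topological space. -/
structure IsDimensionFunction {X : Type u} [TopologicalSpace X] (d : X → Ordinal.{u}) : Prop where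
  not_isLimit : ∀ x, ¬ Order.IsSuccLimit (d x)
  le_of_mem_closure : ∀ x y, y ∈ closure ({x} : Set X) → d y ≤ d x
  eq_of_mem_closure : ∀ x y, y ∈ closure ({x} : Set X) → d y = d x → x = y

/-- A spectral dimension function: all sublevel sets are Thomason. -/
def IsSpectralDimensionFunction {X : Type u} [TopologicalSpace X] (d : X → Ordinal.{u}) : Prop :=
  IsDimensionFunction d ∧ ∀ α : Ordinal.{u}, IsThomason {x : X | d x ≤ α}

/-- The Krull filtration `X_{≤α}`. -/
noncomputable def krullSet (X : Type u) [TopologicalSpace X] (α : Ordinal.{u}) : Set X :=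
  Ordinal.limitRecOn α
    {x : X | IsClosed ({x} : Set X)}
    (fun _ S => S ∪ {x : X | x ∈ Sᶜ ∧ IsClosed {y : (Sᶜ : Set X) | (y : X) = x}})
    (fun o _ ih => ⋃ κ : Set.Iio o, ih κ.1 κ.2)

/-- The (transfinite) Krull dimension of a point. -/
noncomputable def kdim (X : Type u) [TopologicalSpace X] (x : X) : Ordinal.{u} :=
  sInf {α : Ordinal.{u} | x ∈ krullSet X α}

/-- The Cantor–Bendixson filtration `X_{≤α}`. -/
noncomputable def cbSet (X : Type u) [TopologicalSpace X] (α : Ordinal.{u}) : Set X :=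
  Ordinal.limitRecOn α
    {x : X | IsOpen ({x} : Set X)}
    (fun _ S => S ∪ {x : X | x ∈ Sᶜ ∧ IsOpen {y : (Sᶜ : Set X) | (y : X) = x}})
    (fun o _ ih => ⋃ κ : Set.Iio o, ih κ.1 κ.2)

/-- `X` has Cantor–Bendixson rank if the filtration exhausts `X`. -/
def HasCantorBendixsonRank (X : Type u) [TopologicalSpace X] : Prop :=
  ∃ β : Ordinal.{u}, cbSet X β = Set.univ

/-- The Cantor–Bendixson rank of a point. -/
noncomputable def cbRank (X : Type u) [TopologicalSpace X] (x : X) : Ordinal.{u} :=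
  sInf {α : Ordinal.{u} | x ∈ cbSet X α}

theorem constructibleTop_eq_aux (X : Type*) [TopologicalSpace X] :
    constructibleTop X = constructibleTopology X := by
  unfold constructibleTop constructibleTopology constructibleTopologySubbasis
  simp only [isOpen_compl_iff]

theorem statement7 {X : Type u} [TopologicalSpace X] (hX : IsSpectralSpace X)
    (d : X → Ordinal.{u}) (hd : IsSpectralDimensionFunction d) (α : Ordinal.{u}) :
    @IsClosed X (constructibleTop X) {x : X | α < d x} ∧
      IsSpectralSpace {x : X | α < d x} ∧
      IsSpectralMap ((↑) : {x : X | α < d x} → X) := by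
  obtain ⟨hc, h0, ⟨B, hB, -, hBi, hbas⟩, hs⟩ := hX
  have hqs : QuasiSeparatedSpace X := by
    refine QuasiSeparatedSpace.of_isTopologicalBasis (b := ((↑) : B → Set X)) ?_ ?_
    · simpa using hbas
    · intro i j
      exact (hB _ (hBi _ i.2 _ j.2)).2
  have hps : PrespectralSpace X :=
    PrespectralSpace.of_isTopologicalBasis hbas (fun U hU => (hB U hU).2)
  have hcl : @IsClosed X (constructibleTopology X) {x : X | α < d x} := by
    obtain ⟨S, hS, hV⟩ := hd.2 α
    have e : {x : X | α < d x} = (⋃₀ S)ᶜ := by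
      rw [← hV]; ext x; simp
    rw [e]
    refine (@isClosed_compl_iff X (constructibleTopology X) _).2 ?_
    exact @isOpen_sUnion X (constructibleTopology X) _ fun C hC =>
      IsCompact.isOpen_constructibleTopology_of_isClosed (hS C hC).2.2 (hS C hC).1
  have hle : constructibleTopology X ≤ ‹TopologicalSpace X› := by
    refine le_of_le_of_eq (le_generateFrom ?_)
      (PrespectralSpace.isTopologicalBasis (X := X)).eq_generateFrom.symm
    rintro U ⟨hU, hU'⟩
    exact hU'.isOpen_constructibleTopology_of_isOpen hU
  have hcc : @CompactSpace X (constructibleTopology X) := by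
    have h := compactSpace_withConstructibleTopology (X := X)
    exact @Function.Surjective.compactSpace _ _ _ (constructibleTopology X) _
      (WithTopology.continuous_ofTopology _) h (WithTopology.equiv X _).surjective
  have key : ∀ U : Set X, IsOpen U → IsCompact U → IsCompact ({x : X | α < d x} ∩ U) := by
    intro U hU hU'
    have h1 : @IsClosed X (constructibleTopology X) U := by
      refine (@isOpen_compl_iff X U (constructibleTopology X)).1 ?_
      exact IsCompact.isOpen_constructibleTopology_of_isClosed (by simpa using hU')
        hU.isClosed_compl
    have h2 := @IsClosed.isCompact X (constructibleTopology X) _ hcc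
      (@IsClosed.inter X _ _ (constructibleTopology X) hcl h1)
    have h3 := @IsCompact.image X X (constructibleTopology X) _ _ id h2 (continuous_id_of_le hle)
    simpa using h3
  have hsp : IsSpectralMap ((↑) : {x : X | α < d x} → X) := by
    refine ⟨continuous_subtype_val, fun U hU hU' => ?_⟩
    rw [Subtype.isCompact_iff, Subtype.image_preimage_coe]
    exact key U hU hU'
  refine ⟨by rw [constructibleTop_eq_aux]; exact hcl, ⟨?_, inferInstance, ?_, ⟨?_⟩⟩, hsp⟩
  · refine ⟨?_⟩
    simpa using hsp.isCompact_preimage_of_isOpen isOpen_univ isCompact_univ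
  · refine ⟨_, ?_, ?_, ?_,
      (PrespectralSpace.isTopologicalBasis (X := X)).isInducing
        (Topology.IsInducing.subtypeVal (t := {x : X | α < d x}))⟩
    · rintro _ ⟨U, ⟨h1, h2⟩, rfl⟩
      exact ⟨h1.preimage continuous_subtype_val, hsp.isCompact_preimage_of_isOpen h1 h2⟩
    · exact ⟨univ, ⟨isOpen_univ, isCompact_univ⟩, by simp⟩
    · rintro _ ⟨U, ⟨h1, h2⟩, rfl⟩ _ ⟨V, ⟨h3, h4⟩, rfl⟩
      exact ⟨U ∩ V, ⟨h1.inter h3, h2.inter_of_isOpen h4 h1 h3⟩, rfl⟩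
  · intro S hS hS'
    have hT := hS.image _ (continuous_subtype_val.continuousOn)
    obtain ⟨x, hx⟩ := QuasiSober.sober hT.closure isClosed_closure
    obtain ⟨s, hsS⟩ := hS.nonempty
    have hxY : α < d x := lt_of_lt_of_le s.2 (hd.1.le_of_mem_closure x s (by
      rw [hx.def]; exact subset_closure ⟨s, hsS, rfl⟩))
    refine ⟨⟨x, hxY⟩, ?_⟩
    rw [isGenericPoint_def, Topology.IsInducing.subtypeVal.closure_eq_preimage_closure_image,
      image_singleton, hx.def, ← Topology.IsInducing.subtypeVal.closure_eq_preimage_closure_image,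
      hS'.closure_eq]
end

section
/- Let X be a noetherian spectral space. Then for every ordinal α the subset X_{≤α} = {x : kdim_X x ≤ α} defined by the Krull dimension function is specialisation closed, and hence Thomason; consequently kdim_X is a spectral dimension function on X. -/
open TopologicalSpace Set

universe u

theorem krullSet_zero' {X : Type u} [TopologicalSpace X] :
    krullSet X 0 = {x : X | IsClosed ({x} : Set X)} := by
  simp [krullSet]

theorem krullSet_succ' {X : Type u} [TopologicalSpace X] (α : Ordinal.{u}) :
    krullSet X (Order.succ α) = krullSet X α ∪ {x : X | x ∈ (krullSet X α)ᶜ ∧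
      IsClosed {y : ((krullSet X α)ᶜ : Set X) | (y : X) = x}} := by
  unfold krullSet
  rw [← Ordinal.add_one_eq_succ, Ordinal.limitRecOn_add_one]

theorem krullSet_limit' {X : Type u} [TopologicalSpace X] (α : Ordinal.{u})
    (h : Order.IsSuccLimit α) :
    krullSet X α = ⋃ κ : Set.Iio α, krullSet X κ.1 := by
  unfold krullSet
  rw [Ordinal.limitRecOn_limit _ _ _ _ h]

theorem mem_krullSet_zero' {X : Type u} [TopologicalSpace X] (x : X) :
    x ∈ krullSet X 0 ↔ ∀ y ∈ closure ({x} : Set X), y = x := by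
  rw [krullSet_zero', mem_setOf_eq, ← closure_subset_iff_isClosed]
  rfl

theorem mem_krullSet_succ' {X : Type u} [TopologicalSpace X] (α : Ordinal.{u}) (x : X) :
    x ∈ krullSet X (Order.succ α) ↔ x ∈ krullSet X α ∨
      ∀ y ∈ closure ({x} : Set X), y = x ∨ y ∈ krullSet X α := by
  rw [krullSet_succ']
  by_cases hx : x ∈ krullSet X α
  · simp [hx]
  simp only [mem_union, hx, false_or, mem_setOf_eq, mem_compl_iff, not_false_eq_true, true_and]
  constructor
  · intro h y hy
    by_contra! hc
    obtain ⟨t, ht, hte⟩ := isClosed_induced_iff.1 h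
    have hxt : x ∈ t := by
      have : (⟨x, hx⟩ : ((krullSet X α)ᶜ : Set X)) ∈ Subtype.val ⁻¹' t := by
        rw [hte]; rfl
      exact this
    have hyt : y ∈ t := closure_minimal (singleton_subset_iff.2 hxt) ht hy
    have : (⟨y, hc.2⟩ : ((krullSet X α)ᶜ : Set X)) ∈ Subtype.val ⁻¹' t := hyt
    rw [hte] at this
    exact hc.1 this
  · intro h
    refine isClosed_induced_iff.2 ⟨closure {x}, isClosed_closure, ?_⟩
    ext ⟨y, hy⟩
    constructor
    · intro hy'
      exact (h y hy').resolve_right hy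
    · rintro rfl
      exact subset_closure rfl

theorem krullSet_mono' {X : Type u} [TopologicalSpace X] : Monotone (krullSet X) := by
  intro α β
  induction β using Ordinal.limitRecOn with
  | zero => intro h; rw [nonpos_iff_eq_zero.1 h]
  | add_one β ih =>
    intro h
    rw [Ordinal.add_one_eq_succ] at h ⊢
    rcases h.eq_or_lt with rfl | h
    · exact le_rfl
    · exact (ih (Order.lt_succ_iff.1 h)).trans
        fun x hx => (mem_krullSet_succ' β x).2 (Or.inl hx)
  | limit β hβ ih =>
    intro h
    rcases h.eq_or_lt with rfl | h
    · exact le_rfl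
    · rw [krullSet_limit' β hβ]
      exact subset_iUnion (fun κ : Set.Iio β => krullSet X κ.1) ⟨α, h⟩

theorem krullSet_spec' {X : Type u} [TopologicalSpace X] (α : Ordinal.{u}) :
    ∀ x ∈ krullSet X α, closure {x} ⊆ krullSet X α := by
  induction α using Ordinal.limitRecOn with
  | zero =>
    intro x hx y hy
    rwa [(mem_krullSet_zero' x).1 hx y hy]
  | add_one β ih =>
    rw [Ordinal.add_one_eq_succ]
    intro x hx y hy
    rcases (mem_krullSet_succ' β x).1 hx with h | h
    · exact (mem_krullSet_succ' β y).2 (Or.inl (ih x h hy))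
    · rcases h y hy with rfl | h
      · exact hx
      · exact (mem_krullSet_succ' β y).2 (Or.inl h)
  | limit β hβ ih =>
    intro x hx y hy
    rw [krullSet_limit' β hβ, mem_iUnion] at hx ⊢
    obtain ⟨κ, hκ⟩ := hx
    exact ⟨κ, ih κ.1 κ.2 x hκ hy⟩

theorem krullSet_exhaust' {X : Type u} [TopologicalSpace X] [T0Space X]
    [NoetherianSpace X] (x : X) : ∃ α, x ∈ krullSet X α := by
  have wf : WellFounded fun a b : X => Closeds.closure {a} < Closeds.closure {b} :=
    InvImage.wf (fun a : X => Closeds.closure {a}) (wellFounded_lt (α := Closeds X))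
  induction x using wf.induction with
  | _ x ih =>
    have h1 : ∀ y : X, ∃ β, y ∈ closure ({x} : Set X) → y ≠ x → y ∈ krullSet X β := by
      intro y
      by_cases hy : y ∈ closure ({x} : Set X)
      · by_cases hyx : y = x
        · exact ⟨0, fun _ h => (h hyx).elim⟩
        · obtain ⟨β, hβ⟩ := ih y (by
            refine lt_of_le_of_ne ?_ ?_
            · exact closure_minimal (singleton_subset_iff.2 hy) isClosed_closure
            · intro he
              have he' : closure ({y} : Set X) = closure {x} := congrArg (fun c : Closeds X => (c : Set X)) he
              exact hyx (inseparable_iff_closure_eq.2 he').eq)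
          exact ⟨β, fun _ _ => hβ⟩
      · exact ⟨0, fun h => (hy h).elim⟩
    choose f hf using h1
    refine ⟨Order.succ (⨆ y, f y), (mem_krullSet_succ' _ x).2 (Or.inr fun y hy => ?_)⟩
    by_cases hyx : y = x
    · exact Or.inl hyx
    · exact Or.inr (krullSet_mono' (Ordinal.le_iSup f y) (hf y hy hyx))

theorem kdim_le_iff' {X : Type u} [TopologicalSpace X] [T0Space X]
    [NoetherianSpace X] (x : X) (α : Ordinal.{u}) : kdim X x ≤ α ↔ x ∈ krullSet X α := by
  constructor
  · intro h
    have : x ∈ krullSet X (kdim X x) :=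
      csInf_mem (s := {α : Ordinal.{u} | x ∈ krullSet X α}) (krullSet_exhaust' x)
    exact krullSet_mono' h this
  · intro h
    exact csInf_le' h

theorem statement10 {X : Type u} [TopologicalSpace X] (hX : IsSpectralSpace X)
    [TopologicalSpace.NoetherianSpace X] :
    (∀ α : Ordinal.{u}, (∀ x ∈ {y : X | kdim X y ≤ α}, closure {x} ⊆ {y : X | kdim X y ≤ α}) ∧
        IsThomason {y : X | kdim X y ≤ α}) ∧
      IsSpectralDimensionFunction (kdim X) := by
  have := hX.t0Space
  have hset : ∀ α : Ordinal.{u}, {y : X | kdim X y ≤ α} = krullSet X α := fun α => by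
    ext y; exact kdim_le_iff' y α
  have hT : ∀ α : Ordinal.{u}, IsThomason {y : X | kdim X y ≤ α} := by
    intro α
    rw [hset]
    refine ⟨(fun x => closure {x}) '' krullSet X α, ?_, ?_⟩
    · rintro _ ⟨x, -, rfl⟩
      exact ⟨isClosed_closure, isClosed_closure.isOpen_compl, NoetherianSpace.isCompact _⟩
    · apply Subset.antisymm
      · intro x hx
        exact ⟨closure {x}, ⟨x, hx, rfl⟩, subset_closure rfl⟩
      · rintro y ⟨_, ⟨x, hx, rfl⟩, hy⟩
        exact krullSet_spec' α x hx hy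
  refine ⟨fun α => ⟨?_, hT α⟩, ⟨?_, ?_, ?_⟩, hT⟩
  · rw [hset]; exact krullSet_spec' α
  · intro x hl
    have h := (kdim_le_iff' x _).1 le_rfl
    rw [krullSet_limit' _ hl, mem_iUnion] at h
    obtain ⟨κ, hκ⟩ := h
    exact absurd κ.2 (not_lt.2 ((kdim_le_iff' x _).2 hκ))
  · intro x y hy
    exact (kdim_le_iff' y _).2 (krullSet_spec' _ x ((kdim_le_iff' x _).1 le_rfl) hy)
  · intro x y hy he
    have h := (kdim_le_iff' x _).1 le_rfl
    rcases Ordinal.zero_or_succ_or_isSuccLimit (kdim X x) with h0 | ⟨α, hα⟩ | hl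
    · rw [h0] at h
      exact ((mem_krullSet_zero' x).1 h y hy).symm
    · have hlt : α < kdim X x := by rw [← hα]; simp
      have h' : x ∈ krullSet X (Order.succ α) := (kdim_le_iff' x _).1 (by rw [← hα])
      rcases (mem_krullSet_succ' α x).1 h' with h1 | h1
      · exact absurd hlt (not_lt.2 ((kdim_le_iff' x _).2 h1))
      · rcases h1 y hy with h2 | h2
        · exact h2.symm
        · exact absurd hlt (not_lt.2 (he ▸ (kdim_le_iff' y _).2 h2))
    · rw [krullSet_limit' _ hl, mem_iUnion] at h
      obtain ⟨κ, hκ⟩ := h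
      exact absurd κ.2 (not_lt.2 ((kdim_le_iff' x _).2 hκ))
end
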